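/- Let μ be a probability measure on a measurable space, (Tₙ)_{n∈ℕ} a sequence in L¹(μ) with ∫ Tₙ dμ = 0 for every n and sup_{n∈ℕ} ∫ exp(Tₙ) dμ < ∞, and let T be a measurable function such that Tₙ → T in μ-measure. Then T ∈ L¹(μ), ∫ T dμ ≥ 0, and ∫ max{Tₙ − T, 0} dμ → 0 as n → ∞. -/

import Mathlib

open Filter MeasureTheory

/-!
Since `t⁺ ≤ p * exp (t / p)`, the bound on `∫ exp Tₙ` bounds `Tₙ⁺` in every `Lᵖ`, `p < ∞`, so the
positive parts are uniformly integrable. As the means of `Tₙ` are bounded below, `Tₙ` is then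
bounded in `L¹`, and Fatou's lemma makes `T` integrable. Finally `(Tₙ - T)⁺ ≤ Tₙ⁺ + |T|` is
uniformly integrable and tends to `0` in measure, hence in `L¹` by Vitali's theorem, and letting
`n → ∞` in `∫ Tₙ ≤ ∫ T + ∫ (Tₙ - T)⁺` bounds the mean of `T` from below.
-/

open scoped ENNReal NNReal

section

variable {X ι E F : Type*} [MeasurableSpace X] {μ : Measure X} {p q : ℝ≥0∞}

theorem tendstoInMeasure_of_edist_le [EDist E] [EDist F] {l : Filter ι} {f : ι → X → E} {g : X → E}
    {f' : ι → X → F} {g' : X → F} (h : TendstoInMeasure μ f l g)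
    (hle : ∀ i, ∀ᵐ x ∂μ, edist (f' i x) (g' x) ≤ edist (f i x) (g x)) :
    TendstoInMeasure μ f' l g' := fun ε hε =>
  tendsto_of_tendsto_of_tendsto_of_le_of_le tendsto_const_nhds (h ε hε) (fun _ => zero_le)
    fun i => measure_mono_ae <| (hle i).mono fun _ hx hεx => le_trans hεx hx

section NormedGroup

variable [NormedAddCommGroup E] [NormedAddCommGroup F]

theorem memLp_of_tendstoInMeasure_of_eLpNorm_le {l : Filter ι} [l.NeBot] [l.IsCountablyGenerated]
    {f : ι → X → E} {g : X → E} (h : TendstoInMeasure μ f l g)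
    (hf : ∀ i, AEStronglyMeasurable (f i) μ) {C : ℝ≥0∞} (hC : C ≠ ∞)
    (hfC : ∀ᶠ i in l, eLpNorm (f i) p μ ≤ C) : MemLp g p μ :=
  ⟨h.aestronglyMeasurable hf, (eLpNorm_le_of_tendstoInMeasure hfC h hf).trans_lt hC.lt_top⟩

theorem unifIntegrable_of_norm_le {f : ι → X → E} {g : ι → X → F} (hg : UnifIntegrable g p μ)
    (hfg : ∀ i, ∀ᵐ x ∂μ, ‖f i x‖ ≤ ‖g i x‖) : UnifIntegrable f p μ := by
  intro ε hε
  obtain ⟨δ, hδ, hgδ⟩ := hg hε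
  refine ⟨δ, hδ, fun i s hs hμs => (eLpNorm_mono_ae ?_).trans (hgδ i s hs hμs)⟩
  filter_upwards [hfg i] with x hx
  simp only [norm_indicator_eq_indicator_norm]
  exact Set.indicator_le_indicator hx

theorem unifIntegrable_of_eLpNorm_le {f : ι → X → E} (hp : p ≠ 0) (hpq : p < q)
    (hf : ∀ i, AEStronglyMeasurable (f i) μ) {C : ℝ≥0∞} (hC : C ≠ ∞)
    (hfC : ∀ i, eLpNorm (f i) q μ ≤ C) : UnifIntegrable f p μ := by
  set r : ℝ := 1 / p.toReal - 1 / q.toReal with hr_def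
  have hr : 0 < r := by
    have hp_pos : 0 < p.toReal := ENNReal.toReal_pos hp hpq.ne_top
    rcases eq_or_ne q ∞ with rfl | hq
    · simpa [hr_def] using hp_pos
    · exact sub_pos.2 <|
        one_div_lt_one_div_of_lt hp_pos ((ENNReal.toReal_lt_toReal hpq.ne_top hq).2 hpq)
  have hlim : Tendsto (fun δ : ℝ => C * ENNReal.ofReal δ ^ r) (nhds 0) (nhds 0) := by
    have := ENNReal.Tendsto.const_mul (a := C)
      ((ENNReal.continuous_ofReal.tendsto 0).ennrpow_const r) (Or.inr hC)
    simpa only [ENNReal.ofReal_zero, ENNReal.zero_rpow_of_pos hr, mul_zero] using this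
  intro ε hε
  obtain ⟨δ, hδε, hδ⟩ := (((hlim.mono_left nhdsWithin_le_nhds).eventually_le_const
    (ENNReal.ofReal_pos.2 hε)).and (self_mem_nhdsWithin (s := Set.Ioi 0))).exists
  refine ⟨δ, hδ, fun i s hs hμs => ?_⟩
  calc eLpNorm (s.indicator (f i)) p μ
      = eLpNorm (f i) p (μ.restrict s) := eLpNorm_indicator_eq_eLpNorm_restrict hs
    _ ≤ eLpNorm (f i) q (μ.restrict s) * μ.restrict s Set.univ ^ r :=
        eLpNorm_le_eLpNorm_mul_rpow_measure_univ hpq.le (hf i).restrict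
    _ ≤ C * ENNReal.ofReal δ ^ r := by
        rw [Measure.restrict_apply_univ]
        gcongr
        exact (eLpNorm_restrict_le _ _ _ _).trans (hfC i)
    _ ≤ ENNReal.ofReal ε := hδε

end NormedGroup

theorem eLpNorm_max_zero_le_lintegral_exp (hp : p ≠ 0) (hp_top : p ≠ ∞) (f : X → ℝ) :
    eLpNorm (fun x => max (f x) 0) p μ ≤
      p * (∫⁻ x, ENNReal.ofReal (Real.exp (f x)) ∂μ) ^ (1 / p.toReal) := by
  set r : ℝ := p.toReal
  have hr : 0 < r := ENNReal.toReal_pos hp hp_top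
  have hle (x : X) : ‖max (f x) 0‖ ≤ r * ‖Real.exp (f x / r)‖ := by
    rw [Real.norm_of_nonneg (le_max_right _ _), Real.norm_of_nonneg (Real.exp_pos _).le]
    refine max_le ?_ (by positivity)
    calc f x = r * (f x / r) := by field_simp
      _ ≤ r * Real.exp (f x / r) := by
          gcongr
          linarith [Real.add_one_le_exp (f x / r)]
  have hpow (x : X) : ‖Real.exp (f x / r)‖ₑ ^ r = ENNReal.ofReal (Real.exp (f x)) := by
    rw [Real.enorm_of_nonneg (Real.exp_pos _).le,
      ENNReal.ofReal_rpow_of_pos (Real.exp_pos _), ← Real.exp_mul, div_mul_cancel₀ _ hr.ne']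
  calc eLpNorm (fun x => max (f x) 0) p μ
      ≤ ENNReal.ofReal r * eLpNorm (fun x => Real.exp (f x / r)) p μ :=
        eLpNorm_le_mul_eLpNorm_of_ae_le_mul (.of_forall hle) p
    _ = p * (∫⁻ x, ENNReal.ofReal (Real.exp (f x)) ∂μ) ^ (1 / r) := by
        rw [ENNReal.ofReal_toReal hp_top, eLpNorm_eq_lintegral_rpow_enorm_toReal hp hp_top,
          lintegral_congr hpow]

theorem uniformIntegrable_max_zero_of_integral_exp_le (hp : p ≠ 0) (hp_top : p ≠ ∞)
    {f : ι → X → ℝ} (hf : ∀ i, Integrable (fun x => Real.exp (f i x)) μ) {C : ℝ}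
    (hC : ∀ i, ∫ x, Real.exp (f i x) ∂μ ≤ C) :
    UniformIntegrable (fun i x => max (f i x) 0) p μ := by
  have hmeas (i : ι) : AEStronglyMeasurable (fun x => max (f i x) 0) μ :=
    ((Real.aemeasurable_of_aemeasurable_exp (hf i).aemeasurable).max
      aemeasurable_const).aestronglyMeasurable
  have hbound {q : ℝ≥0∞} (hq : q ≠ 0) (hq_top : q ≠ ∞) (i : ι) :
      eLpNorm (fun x => max (f i x) 0) q μ ≤ q * ENNReal.ofReal C ^ (1 / q.toReal) := by
    refine (eLpNorm_max_zero_le_lintegral_exp hq hq_top (f i)).trans ?_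
    rw [← ofReal_integral_eq_lintegral_ofReal (hf i) (.of_forall fun x => (Real.exp_pos _).le)]
    gcongr
    exact hC i
  have hbound_ne_top {q : ℝ≥0∞} (hq_top : q ≠ ∞) :
      q * ENNReal.ofReal C ^ (1 / q.toReal) ≠ ∞ :=
    ENNReal.mul_ne_top hq_top (ENNReal.rpow_ne_top_of_nonneg (by positivity) ENNReal.ofReal_ne_top)
  have hp_add : p + 1 ≠ ∞ := ENNReal.add_ne_top.2 ⟨hp_top, ENNReal.one_ne_top⟩
  refine ⟨hmeas, ?_, (p * ENNReal.ofReal C ^ (1 / p.toReal)).toNNReal, fun i => ?_⟩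
  · exact unifIntegrable_of_eLpNorm_le hp (ENNReal.lt_add_right hp_top one_ne_zero) hmeas
      (hbound_ne_top hp_add) (hbound (by simp) hp_add)
  · rw [ENNReal.coe_toNNReal (hbound_ne_top hp_top)]
    exact hbound hp hp_top i

theorem eLpNorm_one_le_of_le_integral {f : X → ℝ} (hf : Integrable f μ) {C : ℝ≥0} {m : ℝ}
    (hC : eLpNorm (fun x => max (f x) 0) 1 μ ≤ C) (hm : m ≤ ∫ x, f x ∂μ) :
    eLpNorm f 1 μ ≤ ENNReal.ofReal (2 * C - m) := by
  have hpos : ∫ x, max (f x) 0 ∂μ ≤ C := by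
    rwa [eLpNorm_one_eq_lintegral_enorm, ← ofReal_integral_norm_eq_lintegral_enorm hf.pos_part,
      ENNReal.ofReal_le_coe, integral_congr_ae (.of_forall fun x =>
        Real.norm_of_nonneg (le_max_right (f x) 0))] at hC
  have hnorm (x : X) : ‖f x‖ = 2 * max (f x) 0 - f x := by
    rw [Real.norm_eq_abs]
    grind
  rw [eLpNorm_one_eq_lintegral_enorm, ← ofReal_integral_norm_eq_lintegral_enorm hf]
  refine ENNReal.ofReal_le_ofReal ?_
  calc ∫ x, ‖f x‖ ∂μ = 2 * ∫ x, max (f x) 0 ∂μ - ∫ x, f x ∂μ := by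
        simp only [hnorm]
        rw [integral_sub (hf.pos_part.const_mul 2) hf, integral_const_mul]
    _ ≤ 2 * C - m := by linarith

theorem tendsto_eLpNorm_max_sub_zero [IsFiniteMeasure μ] {f : ℕ → X → ℝ} {g : X → ℝ} (hp : 1 ≤ p)
    (hp_top : p ≠ ∞) (hf : ∀ n, AEStronglyMeasurable (f n) μ) (hg : MemLp g p μ)
    (hfui : UnifIntegrable (fun n x => max (f n x) 0) p μ)
    (hfg : TendstoInMeasure μ f atTop g) :
    Tendsto (fun n => eLpNorm (fun x => max (f n x - g x) 0) p μ) atTop (nhds 0) := by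
  have hui : UnifIntegrable (fun n x => max (f n x - g x) 0) p μ := by
    refine unifIntegrable_of_norm_le (hfui.add (unifIntegrable_const hp hp_top hg.abs) hp
      (fun n => (hf n).sup aestronglyMeasurable_const) fun _ => hg.abs.aestronglyMeasurable)
      fun n => .of_forall fun x => ?_
    simp only [Pi.add_apply, Pi.abs_apply, Real.norm_eq_abs]
    grind
  have hmeasure : TendstoInMeasure μ (fun n x => max (f n x - g x) 0) atTop 0 := by
    refine tendstoInMeasure_of_edist_le hfg fun n => .of_forall fun x => ?_
    simp only [edist_dist, Real.dist_eq, Pi.zero_apply]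
    exact ENNReal.ofReal_le_ofReal (by grind)
  have hmeas (n : ℕ) : AEStronglyMeasurable (fun x => max (f n x - g x) 0) μ :=
    ((hf n).sub hg.aestronglyMeasurable).sup aestronglyMeasurable_const
  simpa only [sub_zero] using
    tendsto_Lp_finite_of_tendstoInMeasure hp hp_top hmeas MemLp.zero hui hmeasure

theorem le_integral_of_tendsto_integral_max_sub_zero {l : Filter ι} [l.NeBot] {f : ι → X → ℝ}
    {g : X → ℝ} (hf : ∀ i, Integrable (f i) μ) (hg : Integrable g μ) {m : ℝ}
    (hm : ∀ i, m ≤ ∫ x, f i x ∂μ)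
    (hfg : Tendsto (fun i => ∫ x, max (f i x - g x) 0 ∂μ) l (nhds 0)) :
    m ≤ ∫ x, g x ∂μ := by
  have hle (i : ι) : m ≤ ∫ x, g x ∂μ + ∫ x, max (f i x - g x) 0 ∂μ := by
    have hpos : Integrable (fun x => max (f i x - g x) 0) μ := ((hf i).sub hg).pos_part
    calc m ≤ ∫ x, f i x ∂μ := hm i
      _ ≤ ∫ x, g x + max (f i x - g x) 0 ∂μ :=
          integral_mono (hf i) (hg.add hpos) fun x => by grind
      _ = ∫ x, g x ∂μ + ∫ x, max (f i x - g x) 0 ∂μ := integral_add hg hpos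
  simpa only [add_zero] using ge_of_tendsto' (hfg.const_add (∫ x, g x ∂μ)) hle

theorem stmt_12_general [IsFiniteMeasure μ] {Tn : ℕ → X → ℝ} {T : X → ℝ} {m : ℝ}
    (hTnInt : ∀ n, Integrable (Tn n) μ) (hTnMean : ∀ n, m ≤ ∫ x, Tn n x ∂μ)
    (hTnPos : UniformIntegrable (fun n x => max (Tn n x) 0) 1 μ)
    (hconv : TendstoInMeasure μ Tn atTop T) :
    Integrable T μ ∧ m ≤ ∫ x, T x ∂μ ∧
      Tendsto (fun n => ∫ x, max (Tn n x - T x) 0 ∂μ) atTop (nhds 0) := by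
  have hTnMeas (n : ℕ) : AEStronglyMeasurable (Tn n) μ := (hTnInt n).aestronglyMeasurable
  obtain ⟨C, hC⟩ := hTnPos.2.2
  have hT : Integrable T μ := memLp_one_iff_integrable.1 <|
    memLp_of_tendstoInMeasure_of_eLpNorm_le hconv hTnMeas ENNReal.ofReal_ne_top <|
      .of_forall fun n => eLpNorm_one_le_of_le_integral (hTnInt n) (hC n) (hTnMean n)
  have hL1 := tendsto_eLpNorm_max_sub_zero le_rfl ENNReal.one_ne_top hTnMeas
    (memLp_one_iff_integrable.2 hT) hTnPos.unifIntegrable hconv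
  have hpos (n : ℕ) : Integrable (fun x => max (Tn n x - T x) 0) μ :=
    ((hTnInt n).sub hT).pos_part
  have hlim : Tendsto (fun n => ∫ x, max (Tn n x - T x) 0 ∂μ) atTop (nhds 0) := by
    simpa only [Pi.zero_apply, integral_zero] using
      tendsto_integral_of_L1' (0 : X → ℝ) aestronglyMeasurable_zero (.of_forall hpos)
        (by simpa only [sub_zero] using hL1)
  exact ⟨hT, le_integral_of_tendsto_integral_max_sub_zero hTnInt hT hTnMean hlim, hlim⟩

end

/-- If `Tₙ ∈ L¹(μ)` with `∫ Tₙ dμ = 0`, `sup_n ∫ exp Tₙ dμ < ∞` and `Tₙ → T` in measure,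
then `T ∈ L¹(μ)`, `∫ T dμ ≥ 0` and `∫ max {Tₙ − T, 0} dμ → 0`. -/
theorem stmt_12 {X : Type*} [MeasurableSpace X] (μ : Measure X) [IsProbabilityMeasure μ]
    (Tn : ℕ → X → ℝ) (T : X → ℝ)
    (hTnInt : ∀ n, Integrable (Tn n) μ)
    (hTnMean : ∀ n, (∫ x, Tn n x ∂μ) = 0)
    (hexpInt : ∀ n, Integrable (fun x => Real.exp (Tn n x)) μ)
    (C : ℝ) (hC : ∀ n, (∫ x, Real.exp (Tn n x) ∂μ) ≤ C)
    (hT : Measurable T)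
    (hconv : TendstoInMeasure μ Tn Filter.atTop T) :
    Integrable T μ ∧ 0 ≤ (∫ x, T x ∂μ) ∧
    Filter.Tendsto (fun n => ∫ x, max (Tn n x - T x) 0 ∂μ) Filter.atTop (nhds 0) :=
  stmt_12_general hTnInt (fun n => (hTnMean n).ge)
    (uniformIntegrable_max_zero_of_integral_exp_le one_ne_zero ENNReal.one_ne_top hexpInt hC) hconv
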